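/- Let I = (G, N, 𝒰) be a CFD instance with n players in which G is a star: there is a center vertex c and every other vertex of V is a leaf adjacent exactly to c. Then I admits a proportional valid allocation if and only if there exist a player i ∈ N and an injective map μ : N ∖ {i} → V ∖ {c} such that u_j(μ(j)) ≥ 1/n for every j ∈ N ∖ {i} and u_i(V ∖ μ(N ∖ {i})) ≥ 1/n. -/

import Mathlib

/-!
In a star, a connected bundle avoiding the center has at most one vertex (`subsingleton_of_center`),
while every bundle containing the center is connected (`preconnOn_of_center`).

In a proportional allocation at most one player owns the center; let `i` be that player, or any
player if there is none. Shares are positive, so every other bundle is nonempty, hence a single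
leaf, and these leaves define `μ`. The bundle of `i` misses all of them, so by monotonicity `i` also
values the complement of the chosen leaves at least `1/n`. Conversely, giving `μ j` to each `j ≠ i`
and everything else to `i` is valid, since the complement of a set of leaves contains the center.
-/

/-- The total utility of a set of items under an additive utility function `u`. -/
noncomputable def setVal {V : Type*} (u : V → ℚ) (X : Set V) : ℚ := ∑ᶠ x ∈ X, u x

/-- A set of items induces a connected subgraph of `G`. -/
def ConnOn {V : Type*} (G : SimpleGraph V) (X : Set V) : Prop := (G.induce X).Connected

/-- A (possibly empty) bundle is connected in `G`. -/
def PreconnOn {V : Type*} (G : SimpleGraph V) (X : Set V) : Prop := (G.induce X).Preconnected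

/-- An allocation is valid if every bundle is connected in `G` and bundles are
pairwise disjoint. -/
def ValidAlloc {V N : Type*} (G : SimpleGraph V) (π : N → Set V) : Prop :=
  (∀ i, PreconnOn G (π i)) ∧ ∀ i j, i ≠ j → Disjoint (π i) (π j)

/-- A partition of the whole vertex set into `n` nonempty parts, each inducing a
connected subgraph of `G`. -/
def IsConnPartition {V : Type*} {n : ℕ} (G : SimpleGraph V) (P : Fin n → Set V) : Prop :=
  (∀ j, (P j).Nonempty) ∧ (∀ j, ConnOn G (P j)) ∧
    (∀ j k, j ≠ k → Disjoint (P j) (P k)) ∧ (⋃ j, P j) = Set.univ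

theorem setVal_mono {V : Type*} [Fintype V] {u : V → ℚ} (hu : ∀ v, 0 ≤ u v) {X Y : Set V}
    (h : X ⊆ Y) : setVal u X ≤ setVal u Y := by
  classical
  unfold setVal
  rw [finsum_mem_eq_finite_toFinset_sum _ X.toFinite, finsum_mem_eq_finite_toFinset_sum _ Y.toFinite]
  exact Finset.sum_le_sum_of_subset_of_nonneg (by simpa using h) fun v _ _ => hu v

theorem setVal_singleton {V : Type*} (u : V → ℚ) (v : V) : setVal u {v} = u v := by
  simp [setVal]

theorem subsingleton_of_center {V : Type*} {G : SimpleGraph V} {c : V}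
    (hstar : ∀ x y, G.Adj x y ↔ (x = c ∧ y ≠ c) ∨ (y = c ∧ x ≠ c)) {X : Set V}
    (hX : PreconnOn G X) (hc : c ∉ X) : X.Subsingleton := by
  intro a ha b hb
  obtain ⟨p⟩ := hX ⟨a, ha⟩ ⟨b, hb⟩
  cases p with
  | nil => rfl
  | @cons _ w _ h _ =>
    -- every edge of the star meets the center
    rcases (hstar a w).1 h with h | h
    · exact absurd (h.1 ▸ ha) hc
    · exact absurd (h.1 ▸ w.2) hc

theorem preconnOn_of_center {V : Type*} {G : SimpleGraph V} {c : V}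
    (hstar : ∀ x y, G.Adj x y ↔ (x = c ∧ y ≠ c) ∨ (y = c ∧ x ≠ c)) {X : Set V}
    (hc : c ∈ X) : PreconnOn G X := by
  have key : ∀ a : X, (G.induce X).Reachable ⟨c, hc⟩ a := by
    rintro ⟨a, ha⟩
    by_cases h : a = c
    · subst h; rfl
    · exact SimpleGraph.Adj.reachable ((hstar c a).2 (Or.inl ⟨rfl, h⟩))
  exact fun a b => (key a).symm.trans (key b)

/-- For a CFD instance on a star with center `c`, a proportional valid allocation exists
iff some player `i` and injection `μ` from the other players to the leaves exist such that
every other player `j` values the leaf `μ j` at least `1/n` and `i` values the rest of the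
items at least `1/n`. -/
theorem proportional_on_star_iff {V N : Type*} [Fintype V] [Fintype N] [Nonempty N]
    (G : SimpleGraph V) (c : V)
    (hstar : ∀ x y, G.Adj x y ↔ (x = c ∧ y ≠ c) ∨ (y = c ∧ x ≠ c))
    (u : N → V → ℚ) (hnn : ∀ i v, 0 ≤ u i v) (hsum : ∀ i, ∑ v, u i v = 1) :
    (∃ π : N → Set V, ValidAlloc G π ∧
        ∀ i, 1 / (Fintype.card N : ℚ) ≤ setVal (u i) (π i)) ↔
      (∃ (i : N) (μ : N → V),
        (∀ j, j ≠ i → μ j ≠ c) ∧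
        Set.InjOn μ {j | j ≠ i} ∧
        (∀ j, j ≠ i → 1 / (Fintype.card N : ℚ) ≤ u j (μ j)) ∧
        1 / (Fintype.card N : ℚ) ≤ setVal (u i) (Set.univ \ μ '' {j | j ≠ i})) := by
  classical
  have hpos : 0 < 1 / (Fintype.card N : ℚ) :=
    one_div_pos.2 (Nat.cast_pos.2 Fintype.card_pos)
  constructor
  · rintro ⟨π, ⟨hconn, hdisj⟩, hprop⟩
    obtain ⟨i, hi⟩ : ∃ i, ∀ j, j ≠ i → c ∉ π j := by
      by_cases h : ∃ i, c ∈ π i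
      · obtain ⟨i, hi⟩ := h
        exact ⟨i, fun j hj hcj => Set.disjoint_left.1 (hdisj j i hj) hcj hi⟩
      · exact ⟨Classical.arbitrary N, fun j _ hcj => h ⟨j, hcj⟩⟩
    have hne : ∀ j, (π j).Nonempty := by
      intro j
      by_contra h
      rw [Set.not_nonempty_iff_eq_empty] at h
      have := hprop j
      simp only [h, setVal, finsum_mem_empty] at this
      exact absurd hpos this.not_gt
    choose μ hμ using hne
    refine ⟨i, μ, fun j hj h => hi j hj (h ▸ hμ j), ?_, ?_, (hprop i).trans
      (setVal_mono (hnn i) ?_)⟩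
    · intro j _ k _ hjk
      by_contra h
      exact Set.disjoint_left.1 (hdisj j k h) (hμ j) (hjk ▸ hμ k)
    · intro j hj
      have h := (subsingleton_of_center hstar (hconn j) (hi j hj)).eq_singleton_of_mem (hμ j)
      have := hprop j
      rwa [h, setVal_singleton] at this
    · rintro x hx
      refine ⟨trivial, ?_⟩
      rintro ⟨j, hj, rfl⟩
      exact Set.disjoint_left.1 (hdisj j i hj) (hμ j) hx
  · rintro ⟨i, μ, hc, hinj, hval, hrest⟩
    refine ⟨fun j => if j = i then Set.univ \ μ '' {j | j ≠ i} else {μ j}, ⟨?_, ?_⟩, ?_⟩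
    · intro j
      by_cases hj : j = i
      · simp only [hj, if_true]
        refine preconnOn_of_center hstar ⟨trivial, ?_⟩
        rintro ⟨k, hk, hkc⟩
        exact hc k hk hkc
      · simp only [hj, if_false]
        rintro ⟨a, rfl⟩ ⟨b, rfl⟩
        rfl
    · intro j k hjk
      by_cases hj : j = i
      · have hk : k ≠ i := fun h => hjk (hj.trans h.symm)
        simp only [hj, hk, if_true, if_false, Set.disjoint_singleton_right]
        exact fun h => h.2 ⟨k, hk, rfl⟩
      · by_cases hk : k = i
        · simp only [hj, hk, if_true, if_false, Set.disjoint_singleton_left]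
          exact fun h => h.2 ⟨j, hj, rfl⟩
        · simp only [hj, hk, if_false, Set.disjoint_singleton]
          exact fun h => hjk (hinj hj hk h)
    · intro j
      by_cases hj : j = i
      · subst hj
        simpa only [if_true] using hrest
      · simp only [hj, if_false, setVal_singleton]
        exact hval j hj
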